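/- arXiv:2410.18437 — 2 statements merged into one kernel-verified Lean document; each statement's English description precedes it below -/
import Mathlib

section
/- Assume 𝒳 and 𝒴 are Polish spaces, ζ, η, k and κ_b are bounded continuous symmetric positive-definite kernels, E[ζ(X₁,X₂)²] < ∞, E[η(Y₁,Y₂)²] < ∞, and in addition ζ is integrally strictly positive definite on 𝒳 (for every pair of distinct Borel probability measures P ≠ Q on 𝒳 one has ∫∫ζ dPdP + ∫∫ζ dQdQ > 2∫∫ζ dPdQ) and the kernel ((y,z),(y′,z′)) ↦ η(y,y′)κ_b(z,z′) is integrally strictly positive definite on 𝒴 × ℝ. Then T_{ζ,η,κ_b}(X,Y) = 0 if and only if ω = μ ⊗ ν, i.e. if and only if X and Y are independent. -/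
/-!
The lifter `Z` is independent of `(X, Y)`, so with `P = ω ⊗ μZ`, `Q = μ ⊗ ν ⊗ μZ` and the product
kernel `K = ζ · (η κ_b)`, Fubini's theorem turns `Tlift` into the squared maximum mean discrepancy
`∫∫ K dP dP + ∫∫ K dQ dQ - 2 ∫∫ K dP dQ` (`Tlift_eq`). It vanishes when `ω = μ ⊗ ν`, since then
`P = Q`.

Conversely, `K` is positive definite by Schur's product theorem (`IsPSDKernel.mul`), so a zero
discrepancy forces the mean embeddings `∫ K(w, ·) dP` and `∫ K(w, ·) dQ` to agree at every `w`
(`embedding_eq_of_mmd_eq_zero`); this is a Cauchy–Schwarz argument based on the nonnegativity of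
energies (`double_integral_nonneg`).

A product of integrally strictly positive definite kernels need not be strict on all pairs of
measures, but `P` and `Q` have the same law of `X` and the same law of `(Y, Z)`. Under this
condition the factors can be treated one at a time (`measure_eq_of_embedding_eq`): freezing the
second argument, strictness of `ζ` gives `E_P[1_A(X) L(v, (Y, Z))] = E_Q[1_A(X) L(v, (Y, Z))]` for
`L = η κ_b` and all measurable `A`; strictness of `L` then gives
`P(X ∈ A, Y ∈ B) = Q(X ∈ A, Y ∈ B)`,
that is `ω(A × B) = μ(A) ν(B)`.
-/

open MeasureTheory

noncomputable section

/-- The random-lifter dependence measure `T_{ζ,η,κ_b}(X,Y)`, expressed through integrals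
against the law `ω` of `(X,Y)` and the law `μZ` of the independent lifter `Z`
(the triples `(Xᵢ,Yᵢ,Zᵢ)` are i.i.d. with law `ω ⊗ μZ`). -/
def Tlift {𝒳 𝒴 : Type*} [MeasurableSpace 𝒳] [MeasurableSpace 𝒴]
    (ζ : 𝒳 → 𝒳 → ℝ) (η : 𝒴 → 𝒴 → ℝ) (k : ℝ → ℝ) (b : ℝ)
    (ω : Measure (𝒳 × 𝒴)) (μZ : Measure ℝ) : ℝ :=
  (∫ w₁, (∫ w₂, ζ w₁.1.1 w₂.1.1 * (η w₁.1.2 w₂.1.2 * k ((w₁.2 - w₂.2) / b))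
      ∂(ω.prod μZ)) ∂(ω.prod μZ))
  + (∫ p, ζ p.1.1 p.2.1 ∂(ω.prod ω)) *
      (∫ w₁, (∫ w₂, η w₁.1.2 w₂.1.2 * k ((w₁.2 - w₂.2) / b) ∂(ω.prod μZ)) ∂(ω.prod μZ))
  - 2 * ∫ w₁, (∫ w₂, (∫ w₃, ζ w₁.1.1 w₂.1.1 * (η w₁.1.2 w₃.1.2 * k ((w₁.2 - w₃.2) / b))
      ∂(ω.prod μZ)) ∂(ω.prod μZ)) ∂(ω.prod μZ)

/-! ### Positive definite kernels -/

/-- Positive (semi)definiteness of a real kernel: all its quadratic forms over finite families of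
points are nonnegative. Symmetry is not part of the definition. -/
def IsPSDKernel {S : Type*} (K : S → S → ℝ) : Prop :=
  ∀ (n : ℕ) (x : Fin n → S) (c : Fin n → ℝ), 0 ≤ ∑ i, ∑ j, c i * c j * K (x i) (x j)

lemma IsPSDKernel.sum_nonneg {S : Type*} {K : S → S → ℝ} (hK : IsPSDKernel K)
    {ι : Type*} [Fintype ι] (x : ι → S) (c : ι → ℝ) :
    0 ≤ ∑ i, ∑ j, c i * c j * K (x i) (x j) := by
  have e := Fintype.equivFin ι
  have h := hK (Fintype.card ι) (x ∘ e.symm) (c ∘ e.symm)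
  rw [← e.symm.sum_comp]
  simp_rw [← e.symm.sum_comp (fun j => c _ * c j * K (x _) (x j))]
  exact h

lemma IsPSDKernel.posSemidef {S : Type*} {K : S → S → ℝ} (hK : IsPSDKernel K)
    (hs : ∀ x y, K x y = K y x) {n : ℕ} (x : Fin n → S) :
    (Matrix.of fun i j => K (x i) (x j)).PosSemidef := by
  refine Matrix.PosSemidef.of_dotProduct_mulVec_nonneg ?_ fun c => ?_
  · ext i j
    simp [hs (x j)]
  · refine (hK n x c).trans_eq ?_
    simp only [dotProduct, Matrix.mulVec, Matrix.of_apply, Finset.mul_sum, Pi.star_apply,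
      star_trivial]
    exact Finset.sum_congr rfl fun i _ => Finset.sum_congr rfl fun j _ => by ring

/-- Schur's product theorem for kernels. -/
lemma IsPSDKernel.mul {S : Type*} {K L : S → S → ℝ} (hK : IsPSDKernel K) (hL : IsPSDKernel L)
    (hKs : ∀ x y, K x y = K y x) (hLs : ∀ x y, L x y = L y x) :
    IsPSDKernel fun x y => K x y * L x y := by
  intro n x c
  refine (((hK.posSemidef hKs x).hadamard (hL.posSemidef hLs x)).dotProduct_mulVec_nonneg
    c).trans_eq ?_
  simp only [dotProduct, Matrix.mulVec, Matrix.of_apply, Matrix.hadamard_apply, Finset.mul_sum,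
    Pi.star_apply, star_trivial]
  exact Finset.sum_congr rfl fun i _ => Finset.sum_congr rfl fun j _ => by ring

/-! ### Double integrals of bounded kernels -/

lemma integrable_of_bdd {S : Type*} [MeasurableSpace S] {m : Measure S} [IsFiniteMeasure m]
    {f : S → ℝ} (hf : Measurable f) {C : ℝ} (hC : ∀ x, |f x| ≤ C) : Integrable f m :=
  Integrable.of_bound hf.aestronglyMeasurable C (Filter.Eventually.of_forall hC)

lemma measurable_integral_right {S T : Type*} [MeasurableSpace S] [MeasurableSpace T]
    {m : Measure T} [IsFiniteMeasure m]
    {K : S → T → ℝ} (hK : Measurable fun p : S × T => K p.1 p.2) :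
    Measurable fun x => ∫ y, K x y ∂m :=
  (hK.stronglyMeasurable.integral_prod_right (ν := m)).measurable

lemma abs_integral_le {S : Type*} [MeasurableSpace S] {m : Measure S} [IsProbabilityMeasure m]
    {f : S → ℝ} {C : ℝ} (hC : ∀ x, |f x| ≤ C) : |∫ x, f x ∂m| ≤ C := by
  have h : ∀ᵐ x ∂m, ‖f x‖ ≤ C := Filter.Eventually.of_forall hC
  simpa using norm_integral_le_of_norm_le_const h

/-- A bounded kernel whose sums over all finite samples are nonnegative has a nonnegative double
integral: take the expectation of the sum over an i.i.d. sample of size `n`, where the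
off-diagonal terms contribute `n (n - 1)` times the integral and the diagonal at most `n C`,
and let `n` tend to infinity. -/
lemma double_integral_nonneg {U : Type*} [MeasurableSpace U] {m : Measure U}
    [IsProbabilityMeasure m] {G : U → U → ℝ} (hG : Measurable fun p : U × U => G p.1 p.2)
    {C : ℝ} (hC : ∀ x y, |G x y| ≤ C)
    (hpos : ∀ (n : ℕ) (u : Fin n → U), 0 ≤ ∑ i, ∑ j, G (u i) (u j)) :
    0 ≤ ∫ x, (∫ y, G x y ∂m) ∂m := by
  set I := ∫ x, (∫ y, G x y ∂m) ∂m with hI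
  have hmeas (n : ℕ) (i j : Fin n) : Measurable fun u : Fin n → U => G (u i) (u j) := by
    have hp : Measurable fun u : Fin n → U => (u i, u j) :=
      (measurable_pi_apply i).prodMk (measurable_pi_apply j)
    exact hG.comp hp
  have key (n : ℕ) (i j : Fin n) :
      ∫ u, G (u i) (u j) ∂(Measure.pi fun _ : Fin n => m) ≤ I + if i = j then C - I else 0 := by
    split_ifs with hij
    · have := le_of_abs_le (abs_integral_le (m := Measure.pi fun _ : Fin n => m)
        (fun u => hC (u i) (u j)))
      linarith
    · rw [add_zero]
      have hind := ProbabilityTheory.iIndepFun_pi (μ := fun _ : Fin n => m)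
        (X := fun _ x => x) (fun _ => aemeasurable_id) |>.indepFun hij
      have hmap := hind.map_prod_eq_prod_map_map (measurable_pi_apply i).aemeasurable
        (measurable_pi_apply j).aemeasurable
      have e (i : Fin n) : (Measure.pi fun _ : Fin n => m).map (fun u => u i) = m :=
        (measurePreserving_eval (fun _ : Fin n => m) i).map_eq
      rw [e, e] at hmap
      have : ∫ p, G p.1 p.2 ∂(m.prod m) = I := integral_prod _ (integrable_of_bdd hG
        fun p => hC _ _)
      rw [← this, ← hmap, integral_map]
      · exact ((measurable_pi_apply i).prodMk (measurable_pi_apply j)).aemeasurable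
      · exact hG.aestronglyMeasurable
  have hn (n : ℕ) : 0 ≤ (n : ℝ) * (n * I + (C - I)) := by
    have h0 : 0 ≤ ∫ u, ∑ i, ∑ j, G (u i) (u j) ∂(Measure.pi fun _ : Fin n => m) :=
      integral_nonneg (hpos n)
    rw [integral_finsetSum _ fun i _ => integrable_finsetSum _ fun j _ =>
      integrable_of_bdd (hmeas n i j) fun u => hC _ _] at h0
    simp_rw [integral_finsetSum Finset.univ fun j _ => integrable_of_bdd
      (m := Measure.pi fun _ : Fin n => m) (hmeas n _ j) fun u => hC _ _] at h0
    refine (h0.trans (Finset.sum_le_sum fun i _ => Finset.sum_le_sum fun j _ =>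
      key n i j)).trans_eq ?_
    simp [Finset.sum_add_distrib]
    ring
  by_contra! hneg
  obtain ⟨n, hnn⟩ := exists_nat_gt ((C - I) / (-I))
  rw [div_lt_iff₀ (by linarith)] at hnn
  have h1 := hn (n + 1)
  push_cast at h1
  have : 0 ≤ (n + 1 : ℝ) * I + (C - I) := by
    by_contra! h
    nlinarith [mul_neg_of_pos_of_neg (by positivity : (0 : ℝ) < n + 1) h]
  nlinarith

lemma integral_prod_sep {S : Type*} [MeasurableSpace S] {P Q : Measure S}
    [IsProbabilityMeasure P] [IsProbabilityMeasure Q] {f g : S → ℝ} (hf : Integrable f P)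
    (hg : Integrable g Q) (c : ℝ) :
    ∫ u, (f u.1 - g u.2 + c) ∂(P.prod Q) = ∫ x, f x ∂P - ∫ x, g x ∂Q + c := by
  rw [integral_add _ (integrable_const c), integral_sub (hf.comp_fst _) (hg.comp_snd _),
    integral_fun_fst, integral_fun_snd]
  · simp
  · exact (hf.comp_fst _).sub (hg.comp_snd _)

lemma integral_sub_add_mul {S : Type*} [MeasurableSpace S] {m : Measure S} {f g h : S → ℝ}
    (hf : Integrable f m) (hg : Integrable g m) (hh : Integrable h m) (t : ℝ) :
    ∫ x, (f x - g x + t * h x) ∂m = ∫ x, f x ∂m - ∫ x, g x ∂m + t * ∫ x, h x ∂m := by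
  rw [integral_add (f := fun x => f x - g x) (hf.sub hg) (hh.const_mul t), integral_sub hf hg,
    integral_const_mul]

/-- Two probability measures at zero maximum mean discrepancy for a bounded positive definite
kernel `K` have the same mean embedding. This is Cauchy–Schwarz in the reproducing kernel Hilbert
space: adding `t` times a point mass at `w` to `P - Q` keeps the energy nonnegative for every
real `t`, so the linear term in `t`, twice the difference of the embeddings at `w`, vanishes. -/
lemma embedding_eq_of_mmd_eq_zero {S : Type*} [MeasurableSpace S] {P Q : Measure S}
    [IsProbabilityMeasure P] [IsProbabilityMeasure Q] {K : S → S → ℝ}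
    (hK : Measurable fun p : S × S => K p.1 p.2) {C : ℝ} (hC : ∀ x y, |K x y| ≤ C)
    (hs : ∀ x y, K x y = K y x) (hpsd : IsPSDKernel K)
    (h0 : (∫ x, (∫ y, K x y ∂P) ∂P) + (∫ x, (∫ y, K x y ∂Q) ∂Q)
      - 2 * ∫ x, (∫ y, K x y ∂Q) ∂P = 0) (w : S) :
    ∫ y, K w y ∂P = ∫ y, K w y ∂Q := by
  have hKl (x : S) : Measurable (K x) := hK.comp measurable_prodMk_left
  have hKi (m : Measure S) [IsProbabilityMeasure m] (x : S) : Integrable (K x) m :=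
    integrable_of_bdd (hKl x) (hC x)
  have hKe (m m' : Measure S) [IsProbabilityMeasure m] [IsProbabilityMeasure m'] :
      Integrable (fun x => ∫ y, K x y ∂m) m' :=
    integrable_of_bdd (measurable_integral_right hK) fun x => abs_integral_le (hC x)
  have hswap : ∫ x, (∫ y, K x y ∂P) ∂Q = ∫ x, (∫ y, K x y ∂Q) ∂P := by
    rw [integral_integral_swap (integrable_of_bdd (C := C) (by exact hK) fun p => hC _ _)]
    simp_rw [fun y x => hs x y]
  set a := ∫ y, K w y ∂P with ha
  set p := ∫ y, K w y ∂Q with hp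
  have hquad (t : ℝ) : 0 ≤ 2 * t * (a - p) + t ^ 2 * K w w := by
    -- the Gram kernel of the features `φ u.1 - φ u.2 + t • φ w`, where `φ` is the feature map
    -- of `K`; its double integral against `P ⊗ Q` is the energy of `P - Q + t • δ_w`
    let G : S × S → S × S → ℝ := fun u v =>
      (K u.1 v.1 - K u.2 v.1 + t * K w v.1) - (K u.1 v.2 - K u.2 v.2 + t * K w v.2)
        + t * (K u.1 w - K u.2 w + t * K w w)
    have hGm : Measurable fun q : (S × S) × (S × S) => G q.1 q.2 := by
      have h1 {f g : (S × S) × (S × S) → S} (hf : Measurable f) (hg : Measurable g) :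
          Measurable fun q => K (f q) (g q) := hK.comp (hf.prodMk hg)
      have := @h1
      refine ((((h1 ?_ ?_).sub (h1 ?_ ?_)).add ((h1 ?_ ?_).const_mul t)).sub
        (((h1 ?_ ?_).sub (h1 ?_ ?_)).add ((h1 ?_ ?_).const_mul t))).add
        ((((h1 ?_ ?_).sub (h1 ?_ ?_)).add measurable_const).const_mul t) <;> fun_prop
    have hGb (u v : S × S) : |G u v| ≤ (2 * C + |t| * C) + (2 * C + |t| * C)
        + |t| * (2 * C + |t| * C) := by
      have hb (x y z : ℝ) (hx : |x| ≤ C) (hy : |y| ≤ C) (hz : |z| ≤ C) :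
          |x - y + t * z| ≤ 2 * C + |t| * C := by
        have h1 := abs_add_le (x - y) (t * z)
        have h2 := abs_sub x y
        rw [abs_mul] at h1
        have := mul_le_mul_of_nonneg_left hz (abs_nonneg t)
        linarith
      refine (abs_add_le _ _).trans (add_le_add ((abs_sub _ _).trans (add_le_add ?_ ?_)) ?_)
      · exact hb _ _ _ (hC _ _) (hC _ _) (hC _ _)
      · exact hb _ _ _ (hC _ _) (hC _ _) (hC _ _)
      · rw [abs_mul]
        exact mul_le_mul_of_nonneg_left (hb _ _ _ (hC _ _) (hC _ _) (hC _ _)) (abs_nonneg t)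
    have hGp (n : ℕ) (u : Fin n → S × S) : 0 ≤ ∑ i, ∑ j, G (u i) (u j) := by
      have := hpsd.sum_nonneg (ι := Fin n × Fin 3) (fun i => ![(u i.1).1, (u i.1).2, w] i.2)
        (fun i => ![1, -1, t] i.2)
      refine this.trans_eq ?_
      simp_rw [Fintype.sum_prod_type]
      refine Finset.sum_congr rfl fun i _ => ?_
      rw [Finset.sum_comm]
      refine Finset.sum_congr rfl fun j _ => ?_
      simp only [Fin.sum_univ_three, G]
      simp [hs w]
      ring
    have := double_integral_nonneg (m := P.prod Q) hGm hGb hGp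
    have hin (u : S × S) : ∫ v, G u v ∂(P.prod Q) =
        ((∫ y, K u.1 y ∂P) - (∫ y, K u.1 y ∂Q) + t * K u.1 w)
        - ((∫ y, K u.2 y ∂P) - (∫ y, K u.2 y ∂Q) + t * K u.2 w)
        + (t * (a - p) + t ^ 2 * K w w) := by
      have e (m : Measure S) [IsProbabilityMeasure m] :
          ∫ y, (K u.1 y - K u.2 y + t * K w y) ∂m
            = ∫ y, K u.1 y ∂m - ∫ y, K u.2 y ∂m + t * ∫ y, K w y ∂m := by
        exact integral_sub_add_mul (hKi m _) (hKi m _) (hKi m _) t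
      have hi (m : Measure S) [IsProbabilityMeasure m] :
          Integrable (fun y => K u.1 y - K u.2 y + t * K w y) m :=
        ((hKi m _).sub (hKi m _)).add ((hKi m _).const_mul t)
      have := integral_prod_sep (hi P) (hi Q) (t * (K u.1 w - K u.2 w + t * K w w))
      rw [this, e, e]
      ring
    simp_rw [hin] at this
    have hKw (m : Measure S) [IsProbabilityMeasure m] : Integrable (fun x => K x w) m := by
      simp_rw [fun x => hs x w]; exact hKi m w
    have hi (m : Measure S) [IsProbabilityMeasure m] :
        Integrable (fun x => (∫ y, K x y ∂P) - (∫ y, K x y ∂Q) + t * K x w) m :=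
      ((hKe P m).sub (hKe Q m)).add ((hKw m).const_mul t)
    have e (m : Measure S) [IsProbabilityMeasure m] :
        ∫ x, ((∫ y, K x y ∂P) - (∫ y, K x y ∂Q) + t * K x w) ∂m
          = ∫ x, (∫ y, K x y ∂P) ∂m - ∫ x, (∫ y, K x y ∂Q) ∂m + t * ∫ y, K w y ∂m := by
      rw [integral_sub_add_mul (hKe P m) (hKe Q m) (hKw m) t]
      simp_rw [fun x => hs x w]
    rw [integral_prod_sep (hi P) (hi Q), e, e, hswap, ← ha, ← hp] at this
    linarith
  -- a nonnegative quadratic in `t` with zero constant term has zero linear term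
  by_contra hne
  have hd : 0 < (a - p) ^ 2 := by
    have := sub_ne_zero.mpr hne
    positivity
  have h1 := hquad (-(a - p) / (1 + |K w w|))
  have hpos : 0 < 1 + |K w w| := by positivity
  have h2 : (2 * (-(a - p) / (1 + |K w w|)) * (a - p) + (-(a - p) / (1 + |K w w|)) ^ 2 * K w w)
      * (1 + |K w w|) ^ 2 = (a - p) ^ 2 * (K w w - 2 * (1 + |K w w|)) := by
    field_simp
    ring
  have h3 := mul_nonneg h1 (sq_nonneg (1 + |K w w|))
  rw [h2] at h3
  have := le_abs_self (K w w)
  nlinarith [abs_nonneg (K w w)]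

/-! ### Strictly positive definite kernels and marginal embeddings -/

/-- Integral strict positive definiteness, tested only on differences of two probability
measures (that is, strict positivity of the maximum mean discrepancy). -/
def IsISPD {S : Type*} [MeasurableSpace S] (J : S → S → ℝ) : Prop :=
  ∀ P Q : Measure S, IsProbabilityMeasure P → IsProbabilityMeasure Q → P ≠ Q →
    2 * ∫ x, (∫ y, J x y ∂Q) ∂P < (∫ x, (∫ y, J x y ∂P) ∂P) + ∫ x, (∫ y, J x y ∂Q) ∂Q

/-- The embedding of an integrally strictly positive definite kernel separates finite measures of
equal mass. -/
lemma IsISPD.measure_eq {S : Type*} [MeasurableSpace S] {J : S → S → ℝ} (hJ : IsISPD J)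
    (hJm : Measurable fun p : S × S => J p.1 p.2) {C : ℝ} (hC : ∀ x y, |J x y| ≤ C)
    (hs : ∀ x y, J x y = J y x) {P Q : Measure S} [IsFiniteMeasure P] [IsFiniteMeasure Q]
    (hmass : P Set.univ = Q Set.univ) (h : ∀ x, ∫ y, J x y ∂P = ∫ y, J x y ∂Q) : P = Q := by
  by_cases hz : P Set.univ = 0
  -- normalization is impossible when the common mass is zero
  · rw [Measure.measure_univ_eq_zero.mp hz, Measure.measure_univ_eq_zero.mp (hmass.symm.trans hz)]
  set c := P Set.univ with hc
  have hfin : c ≠ ⊤ := measure_ne_top P _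
  have hP : IsProbabilityMeasure (c⁻¹ • P) :=
    ⟨by simp [← hc, ENNReal.inv_mul_cancel hz hfin]⟩
  have hQ : IsProbabilityMeasure (c⁻¹ • Q) :=
    ⟨by simp [← hmass, ENNReal.inv_mul_cancel hz hfin]⟩
  have h' (x : S) : ∫ y, J x y ∂(c⁻¹ • P) = ∫ y, J x y ∂(c⁻¹ • Q) := by
    rw [integral_smul_measure, integral_smul_measure, h]
  have heq : c⁻¹ • P = c⁻¹ • Q := by
    by_contra hne
    have hlt := hJ _ _ hP hQ hne
    have hswap : ∫ x, (∫ y, J x y ∂(c⁻¹ • P)) ∂(c⁻¹ • Q)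
        = ∫ x, (∫ y, J x y ∂(c⁻¹ • Q)) ∂(c⁻¹ • P) := by
      rw [integral_integral_swap (integrable_of_bdd (C := C) (by exact hJm) fun p => hC _ _)]
      simp_rw [fun y x => hs x y]
    simp_rw [h'] at hlt hswap
    linarith
  have := congrArg (fun m => c • m) heq
  simpa [smul_smul, ENNReal.mul_inv_cancel hz hfin] using this

/-- If `P` and `Q` have the same `X`- and `V`-marginals and the same embedding under the product
of two integrally strictly positive definite kernels `J` and `L`, then they agree on rectangles.
For fixed `v`, strictness of `J` identifies the signed measures `L(v, V) dP` and `L(v, V) dQ`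
pushed forward by `X`; then, for fixed `A`, strictness of `L` identifies the laws of `V` under
`P` and `Q` restricted to `X ∈ A`. -/
lemma measure_eq_of_embedding_eq {W S T : Type*} [MeasurableSpace W] [MeasurableSpace S]
    [MeasurableSpace T] {P Q : Measure W} [IsProbabilityMeasure P] [IsProbabilityMeasure Q]
    {X : W → S} {V : W → T} (hX : Measurable X) (hV : Measurable V)
    (hPX : P.map X = Q.map X) (hPV : P.map V = Q.map V)
    {J : S → S → ℝ} (hJ : IsISPD J) (hJm : Measurable fun p : S × S => J p.1 p.2)
    {C : ℝ} (hJC : ∀ x y, |J x y| ≤ C) (hJs : ∀ x y, J x y = J y x)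
    {L : T → T → ℝ} (hL : IsISPD L) (hLm : Measurable fun p : T × T => L p.1 p.2)
    {D : ℝ} (hLD : ∀ x y, |L x y| ≤ D) (hLs : ∀ x y, L x y = L y x)
    (h : ∀ x v, ∫ w, J x (X w) * L v (V w) ∂P = ∫ w, J x (X w) * L v (V w) ∂Q)
    {A : Set S} (hA : MeasurableSet A) {B : Set T} (hB : MeasurableSet B) :
    P (X ⁻¹' A ∩ V ⁻¹' B) = Q (X ⁻¹' A ∩ V ⁻¹' B) := by
  have hLv (v : T) : Measurable (L v) := hLm.comp measurable_prodMk_left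
  have hJx (x : S) : Measurable (J x) := hJm.comp measurable_prodMk_left
  have hX_int {f : S → ℝ} (hf : Measurable f) : ∫ w, f (X w) ∂P = ∫ w, f (X w) ∂Q := by
    rw [← integral_map hX.aemeasurable hf.aestronglyMeasurable, hPX,
      integral_map hX.aemeasurable hf.aestronglyMeasurable]
  -- adding `D` turns `L v` into a nonnegative density; the extra term depends on the
  -- `X`-marginal only, so it is the same for `P` and `Q`
  let d (v : T) (w : W) : ENNReal := ENNReal.ofReal (D + L v (V w))
  have hd (v : T) : Measurable (d v) :=
    (measurable_const.add ((hLv v).comp hV)).ennreal_ofReal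
  let R (m : Measure W) (v : T) : Measure S := (m.withDensity (d v)).map X
  have hdle (v : T) (w : W) : d v w ≤ ENNReal.ofReal (2 * D) := by
    refine ENNReal.ofReal_le_ofReal ?_
    linarith [le_of_abs_le (hLD v (V w))]
  have hlin (m : Measure W) [IsProbabilityMeasure m] (v : T) : ∫⁻ w, d v w ∂m ≠ ⊤ :=
    ((lintegral_mono (hdle v)).trans_lt (by
      rw [lintegral_const, measure_univ, mul_one]
      exact ENNReal.ofReal_lt_top)).ne
  have hRfin (m : Measure W) [IsProbabilityMeasure m] (v : T) : IsFiniteMeasure (R m v) := by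
    have := isFiniteMeasure_withDensity (hlin m v)
    infer_instance
  have hRint (m : Measure W) [IsProbabilityMeasure m] (v : T) {f : S → ℝ} (hf : Measurable f)
      {E : ℝ} (hE : ∀ x, |f x| ≤ E) :
      ∫ x, f x ∂(R m v) = D * ∫ w, f (X w) ∂m + ∫ w, f (X w) * L v (V w) ∂m := by
    rw [integral_map hX.aemeasurable hf.aestronglyMeasurable,
      integral_withDensity_eq_integral_toReal_smul (hd v)
        (Filter.Eventually.of_forall fun w => ENNReal.ofReal_lt_top), ← integral_const_mul,
      ← integral_add]
    · refine integral_congr_ae (Filter.Eventually.of_forall fun w => ?_)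
      have h0 : 0 ≤ D + L v (V w) := by linarith [neg_le_of_abs_le (hLD v (V w))]
      simp only [d, ENNReal.toReal_ofReal h0, smul_eq_mul]
      ring
    · exact (integrable_of_bdd (hf.comp hX) fun w => hE _).const_mul D
    · refine integrable_of_bdd (C := E * D) ((hf.comp hX).mul ((hLv v).comp hV)) fun w => ?_
      rw [abs_mul]
      exact mul_le_mul (hE _) (hLD _ _) (abs_nonneg _) ((abs_nonneg _).trans (hE (X w)))
  have hR (v : T) : R P v = R Q v := by
    have := hRfin P v
    have := hRfin Q v
    refine hJ.measure_eq hJm hJC hJs ?_ fun x => ?_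
    · simp only [R, Measure.map_apply hX MeasurableSet.univ, Set.preimage_univ,
        withDensity_apply _ MeasurableSet.univ, Measure.restrict_univ, d]
      have hm : Measurable fun u => ENNReal.ofReal (D + L v u) :=
        (measurable_const.add (hLv v)).ennreal_ofReal
      rw [← lintegral_map hm hV, hPV, lintegral_map hm hV]
    · rw [hRint P v (hJx x) (hJC x), hRint Q v (hJx x) (hJC x), hX_int (hJx x), h]
  have hAm : Measurable (A.indicator (1 : S → ℝ)) := measurable_one.indicator hA
  have hAL (v : T) : ∫ w, A.indicator (1 : S → ℝ) (X w) * L v (V w) ∂P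
      = ∫ w, A.indicator (1 : S → ℝ) (X w) * L v (V w) ∂Q := by
    have hb (x : S) : |A.indicator (1 : S → ℝ) x| ≤ 1 := by
      by_cases hx : x ∈ A <;> simp [hx]
    have e := hRint P v hAm hb
    rw [hR, hRint Q v hAm hb, hX_int hAm] at e
    linarith
  have hres (m : Measure W) (v : T) : ∫ u, L v u ∂((m.restrict (X ⁻¹' A)).map V)
      = ∫ w, A.indicator (1 : S → ℝ) (X w) * L v (V w) ∂m := by
    rw [integral_map hV.aemeasurable (hLv v).aestronglyMeasurable,
      ← integral_indicator (hX hA)]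
    refine integral_congr_ae (Filter.Eventually.of_forall fun w => ?_)
    by_cases hw : X w ∈ A <;> simp [Set.indicator, hw]
  have hfinal : (P.restrict (X ⁻¹' A)).map V = (Q.restrict (X ⁻¹' A)).map V := by
    refine hL.measure_eq hLm hLD hLs ?_ fun v => by rw [hres, hres, hAL]
    simp only [Measure.map_apply hV MeasurableSet.univ, Set.preimage_univ,
      Measure.restrict_apply_univ]
    rw [← Measure.map_apply hX hA, hPX, Measure.map_apply hX hA]
  have := congrArg (fun m => m B) hfinal
  simpa only [Measure.map_apply hV hB, Measure.restrict_apply (hV hB), Set.inter_comm] using this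

/-! ### The lifted dependence measure as a maximum mean discrepancy -/

lemma integral_indep_mul {𝒳 𝒴 : Type*} [MeasurableSpace 𝒳] [MeasurableSpace 𝒴]
    (ω : Measure (𝒳 × 𝒴)) [IsProbabilityMeasure ω] (μZ : Measure ℝ) [IsProbabilityMeasure μZ]
    {f : 𝒳 → ℝ} {g : 𝒴 × ℝ → ℝ} (hf : Measurable f) (hg : Measurable g) :
    ∫ w, f w.1.1 * g (w.1.2, w.2) ∂(((ω.map Prod.fst).prod (ω.map Prod.snd)).prod μZ)
      = (∫ w, f w.1.1 ∂(ω.prod μZ)) * ∫ w, g (w.1.2, w.2) ∂(ω.prod μZ) := by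
  have := Measure.isProbabilityMeasure_map (μ := ω) measurable_fst.aemeasurable
  have := Measure.isProbabilityMeasure_map (μ := ω) measurable_snd.aemeasurable
  have h1 : ∫ x, f x ∂(ω.map Prod.fst) = ∫ w, f w.1.1 ∂(ω.prod μZ) := by
    rw [integral_map measurable_fst.aemeasurable hf.aestronglyMeasurable]
    simp [integral_fun_fst (μ := ω) (ν := μZ) fun p => f p.1]
  have h2 : ∫ v, g v ∂((ω.map Prod.snd).prod μZ) = ∫ w, g (w.1.2, w.2) ∂(ω.prod μZ) := by
    have e : (ω.map Prod.snd).prod μZ = (ω.prod μZ).map (Prod.map Prod.snd id) := by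
      rw [← Measure.map_prod_map _ _ measurable_snd measurable_id, Measure.map_id]
    rw [e, integral_map (measurable_snd.prodMap measurable_id).aemeasurable
      hg.aestronglyMeasurable]
    rfl
  rw [← h1, ← h2, ← integral_prod_mul, ← (measurePreserving_prodAssoc _ _ _).integral_comp']
  rfl

/-- `Tlift` is the squared maximum mean discrepancy, for the product kernel, between the law of
`(X, Y, Z)` and the law `μ ⊗ ν ⊗ μZ`. -/
lemma Tlift_eq {𝒳 𝒴 : Type*} [MeasurableSpace 𝒳] [MeasurableSpace 𝒴]
    {ζ : 𝒳 → 𝒳 → ℝ} {η : 𝒴 → 𝒴 → ℝ} {k : ℝ → ℝ} {b : ℝ} {C : ℝ}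
    (hζ : Measurable fun p : 𝒳 × 𝒳 => ζ p.1 p.2) (hζ_bdd : ∀ x x', |ζ x x'| ≤ C)
    (hL : Measurable fun p : (𝒴 × ℝ) × (𝒴 × ℝ) => η p.1.1 p.2.1 * k ((p.1.2 - p.2.2) / b))
    (ω : Measure (𝒳 × 𝒴)) [IsProbabilityMeasure ω] (μZ : Measure ℝ) [IsProbabilityMeasure μZ] :
    let K := fun w w' : (𝒳 × 𝒴) × ℝ =>
      ζ w.1.1 w'.1.1 * (η w.1.2 w'.1.2 * k ((w.2 - w'.2) / b))
    let P := ω.prod μZ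
    let Q := ((ω.map Prod.fst).prod (ω.map Prod.snd)).prod μZ
    Tlift ζ η k b ω μZ = (∫ w, (∫ w', K w w' ∂P) ∂P) + (∫ w, (∫ w', K w w' ∂Q) ∂Q)
      - 2 * ∫ w, (∫ w', K w w' ∂Q) ∂P := by
  intro K P Q
  let L : 𝒴 × ℝ → 𝒴 × ℝ → ℝ := fun v v' => η v.1 v'.1 * k ((v.2 - v'.2) / b)
  have hζx (x : 𝒳) : Measurable (ζ x) := hζ.comp measurable_prodMk_left
  have hLv (v : 𝒴 × ℝ) : Measurable (L v) := hL.comp measurable_prodMk_left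
  have hQ (w : (𝒳 × 𝒴) × ℝ) : ∫ w', K w w' ∂Q
      = (∫ w', ζ w.1.1 w'.1.1 ∂P) * ∫ w', L (w.1.2, w.2) (w'.1.2, w'.2) ∂P :=
    integral_indep_mul ω μZ (hζx w.1.1) (hLv (w.1.2, w.2))
  have hF : Measurable fun x => ∫ w', ζ x w'.1.1 ∂P :=
    measurable_integral_right (K := fun x (w' : (𝒳 × 𝒴) × ℝ) => ζ x w'.1.1)
      (hζ.comp (by fun_prop : Measurable fun p : 𝒳 × ((𝒳 × 𝒴) × ℝ) => (p.1, p.2.1.1)))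
  have hG : Measurable fun v => ∫ w', L v (w'.1.2, w'.2) ∂P :=
    measurable_integral_right (K := fun v (w' : (𝒳 × 𝒴) × ℝ) => L v (w'.1.2, w'.2))
      (hL.comp (by fun_prop :
        Measurable fun p : (𝒴 × ℝ) × ((𝒳 × 𝒴) × ℝ) => (p.1, (p.2.1.2, p.2.2))))
  have hQQ : ∫ w, (∫ w', K w w' ∂Q) ∂Q = (∫ w, (∫ w', ζ w.1.1 w'.1.1 ∂P) ∂P) *
      ∫ w, (∫ w', L (w.1.2, w.2) (w'.1.2, w'.2) ∂P) ∂P := by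
    simp_rw [hQ]
    exact integral_indep_mul ω μZ hF hG
  have hζζ : ∫ p, ζ p.1.1 p.2.1 ∂(ω.prod ω) = ∫ w, (∫ w', ζ w.1.1 w'.1.1 ∂P) ∂P := by
    have e (x : 𝒳) : ∫ w', ζ x w'.1.1 ∂P = ∫ q, ζ x q.1 ∂ω := by
      simp [P, integral_fun_fst (μ := ω) (ν := μZ) fun q => ζ x q.1]
    simp_rw [e]
    have hm : Measurable fun p : (𝒳 × 𝒴) × (𝒳 × 𝒴) => ζ p.1.1 p.2.1 :=
      hζ.comp (by fun_prop : Measurable fun p : (𝒳 × 𝒴) × (𝒳 × 𝒴) => (p.1.1, p.2.1))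
    rw [integral_prod _ (integrable_of_bdd hm fun p => hζ_bdd _ _)]
    simp [P, integral_fun_fst (μ := ω) (ν := μZ) fun p => ∫ q, ζ p.1 q.1 ∂ω]
  have hcross : ∫ w, (∫ w', K w w' ∂Q) ∂P = ∫ w₁, (∫ w₂, (∫ w₃, ζ w₁.1.1 w₂.1.1 *
      (η w₁.1.2 w₃.1.2 * k ((w₁.2 - w₃.2) / b)) ∂P) ∂P) ∂P := by
    simp_rw [hQ, integral_const_mul, integral_mul_const]
    rfl
  rw [hQQ, hcross, ← hζζ]
  rfl

/-- independence–zero equivalence. Under the assumptions of Statement 1,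
if moreover `ζ` is integrally strictly positive definite on `𝒳` and the lifted kernel
`((y,z),(y′,z′)) ↦ η(y,y′)·k((z−z′)/b)` is integrally strictly positive definite on
`𝒴 × ℝ`, then `T_{ζ,η,κ_b}(X,Y) = 0` iff `ω = μ ⊗ ν`, i.e. iff `X ⟂ Y`. -/
theorem statement2 {𝒳 𝒴 : Type*}
    [TopologicalSpace 𝒳] [PolishSpace 𝒳] [MeasurableSpace 𝒳] [BorelSpace 𝒳]
    [TopologicalSpace 𝒴] [PolishSpace 𝒴] [MeasurableSpace 𝒴] [BorelSpace 𝒴]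
    (ζ : 𝒳 → 𝒳 → ℝ) (η : 𝒴 → 𝒴 → ℝ) (k : ℝ → ℝ) (b : ℝ) (hb : 0 < b)
    -- ζ: bounded continuous symmetric positive definite
    (hζ_cont : Continuous fun p : 𝒳 × 𝒳 => ζ p.1 p.2)
    (Cζ : ℝ) (hζ_bdd : ∀ x x', |ζ x x'| ≤ Cζ)
    (hζ_symm : ∀ x x', ζ x x' = ζ x' x)
    (hζ_posdef : ∀ (n : ℕ) (x : Fin n → 𝒳) (c : Fin n → ℝ),
      0 ≤ ∑ i, ∑ j, c i * c j * ζ (x i) (x j))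
    -- η: bounded continuous symmetric positive definite
    (hη_cont : Continuous fun p : 𝒴 × 𝒴 => η p.1 p.2)
    (Cη : ℝ) (hη_bdd : ∀ y y', |η y y'| ≤ Cη)
    (hη_symm : ∀ y y', η y y' = η y' y)
    (hη_posdef : ∀ (n : ℕ) (y : Fin n → 𝒴) (c : Fin n → ℝ),
      0 ≤ ∑ i, ∑ j, c i * c j * η (y i) (y j))
    -- k: bounded continuous symmetric positive definite function on ℝ,
    -- a nonnegative kernel with unit integral
    (hk_cont : Continuous k)
    (Ck : ℝ) (hk_bdd : ∀ u, |k u| ≤ Ck)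
    (hk_symm : ∀ u, k (-u) = k u)
    (hk_nonneg : ∀ u, 0 ≤ k u) (hk_int : ∫ u, k u = 1)
    (hk_posdef : ∀ (n : ℕ) (z : Fin n → ℝ) (c : Fin n → ℝ),
      0 ≤ ∑ i, ∑ j, c i * c j * k (z i - z j))
    -- joint law ω of (X,Y) and law μZ of the lifter Z, with Lebesgue density g
    (ω : Measure (𝒳 × 𝒴)) [IsProbabilityMeasure ω]
    (μZ : Measure ℝ) [IsProbabilityMeasure μZ] (g : ℝ → ℝ)
    (hg : μZ = (volume : Measure ℝ).withDensity fun z => ENNReal.ofReal (g z))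
    -- finite second moments
    (hζ_L2 : Integrable (fun p : (𝒳 × 𝒴) × (𝒳 × 𝒴) => (ζ p.1.1 p.2.1) ^ 2) (ω.prod ω))
    (hη_L2 : Integrable (fun p : (𝒳 × 𝒴) × (𝒳 × 𝒴) => (η p.1.2 p.2.2) ^ 2) (ω.prod ω))
    -- ζ is integrally strictly positive definite on 𝒳
    (hζ_ispd : ∀ P Q : Measure 𝒳, IsProbabilityMeasure P → IsProbabilityMeasure Q →
      P ≠ Q →
      2 * ∫ x, (∫ x', ζ x x' ∂Q) ∂P <
        (∫ x, (∫ x', ζ x x' ∂P) ∂P) + ∫ x, (∫ x', ζ x x' ∂Q) ∂Q)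
    -- the lifted kernel η·κ_b is integrally strictly positive definite on 𝒴 × ℝ
    (hηκ_ispd : ∀ P Q : Measure (𝒴 × ℝ), IsProbabilityMeasure P → IsProbabilityMeasure Q →
      P ≠ Q →
      2 * ∫ v, (∫ v', η v.1 v'.1 * k ((v.2 - v'.2) / b) ∂Q) ∂P <
        (∫ v, (∫ v', η v.1 v'.1 * k ((v.2 - v'.2) / b) ∂P) ∂P) +
          ∫ v, (∫ v', η v.1 v'.1 * k ((v.2 - v'.2) / b) ∂Q) ∂Q) :
    Tlift ζ η k b ω μZ = 0 ↔ ω = (ω.map Prod.fst).prod (ω.map Prod.snd) := by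
  have := Measure.isProbabilityMeasure_map (μ := ω) measurable_fst.aemeasurable
  have := Measure.isProbabilityMeasure_map (μ := ω) measurable_snd.aemeasurable
  let L : 𝒴 × ℝ → 𝒴 × ℝ → ℝ := fun v v' => η v.1 v'.1 * k ((v.2 - v'.2) / b)
  have hζm : Measurable fun p : 𝒳 × 𝒳 => ζ p.1 p.2 := hζ_cont.measurable
  have hLm : Measurable fun p : (𝒴 × ℝ) × (𝒴 × ℝ) => L p.1 p.2 := by
    have h1 : Continuous fun p : (𝒴 × ℝ) × (𝒴 × ℝ) => η p.1.1 p.2.1 :=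
      hη_cont.comp (by fun_prop :
        Continuous fun p : (𝒴 × ℝ) × (𝒴 × ℝ) => (p.1.1, p.2.1))
    have h2 : Continuous fun p : (𝒴 × ℝ) × (𝒴 × ℝ) => k ((p.1.2 - p.2.2) / b) :=
      hk_cont.comp (by fun_prop)
    exact (h1.mul h2).measurable
  have hLD (v v' : 𝒴 × ℝ) : |L v v'| ≤ Cη * Ck := by
    rw [abs_mul]
    exact mul_le_mul (hη_bdd _ _) (hk_bdd _) (abs_nonneg _)
      ((abs_nonneg _).trans (hη_bdd v.1 v'.1))
  have hks (z z' : ℝ) : k ((z - z') / b) = k ((z' - z) / b) := by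
    rw [← hk_symm, ← neg_div, neg_sub]
  have hLs (v v' : 𝒴 × ℝ) : L v v' = L v' v := by
    simp only [L]
    rw [hη_symm, hks]
  have hT := Tlift_eq (b := b) hζm hζ_bdd hLm ω μZ
  simp only at hT
  constructor
  · intro h0
    rw [hT] at h0
    have hKm : Measurable fun p : ((𝒳 × 𝒴) × ℝ) × ((𝒳 × 𝒴) × ℝ) => ζ p.1.1.1 p.2.1.1 *
        (η p.1.1.2 p.2.1.2 * k ((p.1.2 - p.2.2) / b)) :=
      (hζm.comp (by fun_prop : Measurable
        fun p : ((𝒳 × 𝒴) × ℝ) × ((𝒳 × 𝒴) × ℝ) => (p.1.1.1, p.2.1.1))).mul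
      (hLm.comp (by fun_prop : Measurable
        fun p : ((𝒳 × 𝒴) × ℝ) × ((𝒳 × 𝒴) × ℝ) => ((p.1.1.2, p.1.2), (p.2.1.2, p.2.2))))
    have hζP : IsPSDKernel fun w w' : (𝒳 × 𝒴) × ℝ => ζ w.1.1 w'.1.1 :=
      fun n x c => hζ_posdef n (fun i => (x i).1.1) c
    have hηP : IsPSDKernel fun w w' : (𝒳 × 𝒴) × ℝ => η w.1.2 w'.1.2 :=
      fun n x c => hη_posdef n (fun i => (x i).1.2) c
    have hkP : IsPSDKernel fun w w' : (𝒳 × 𝒴) × ℝ => k ((w.2 - w'.2) / b) := by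
      intro n x c
      simpa only [sub_div] using hk_posdef n (fun i => (x i).2 / b) c
    have hemb := embedding_eq_of_mmd_eq_zero hKm (C := Cζ * (Cη * Ck))
      (fun w w' => by
        rw [abs_mul]
        exact mul_le_mul (hζ_bdd _ _) (hLD (w.1.2, w.2) (w'.1.2, w'.2)) (abs_nonneg _)
          ((abs_nonneg _).trans (hζ_bdd w.1.1 w'.1.1)))
      (fun w w' => by rw [hζ_symm, hη_symm, hks])
      (hζP.mul (hηP.mul hkP (fun _ _ => hη_symm _ _) fun _ _ => hks _ _)
        (fun _ _ => hζ_symm _ _) fun w w' => hLs (w.1.2, w.2) (w'.1.2, w'.2)) h0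
    have hX : Measurable fun w : (𝒳 × 𝒴) × ℝ => w.1.1 := by fun_prop
    have hV : Measurable fun w : (𝒳 × 𝒴) × ℝ => (w.1.2, w.2) := by fun_prop
    refine (Measure.prod_eq fun A B hA hB => ?_).symm
    have hmain := measure_eq_of_embedding_eq
      (P := ω.prod μZ) (Q := ((ω.map Prod.fst).prod (ω.map Prod.snd)).prod μZ) hX hV
      ?_ ?_ hζ_ispd hζm hζ_bdd hζ_symm hηκ_ispd hLm hLD hLs
      (fun x v => hemb ((x, v.1), v.2)) hA (hB.prod MeasurableSet.univ)
    · have hset : (fun w : (𝒳 × 𝒴) × ℝ => w.1.1) ⁻¹' A ∩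
          (fun w : (𝒳 × 𝒴) × ℝ => (w.1.2, w.2)) ⁻¹' (B ×ˢ Set.univ)
          = (A ×ˢ B) ×ˢ Set.univ := by
        ext; simp
      rw [hset] at hmain
      simpa [Measure.prod_prod] using hmain
    · have e : (fun w : (𝒳 × 𝒴) × ℝ => w.1.1) = Prod.fst ∘ Prod.fst := rfl
      rw [e, ← Measure.map_map measurable_fst measurable_fst,
        ← Measure.map_map measurable_fst measurable_fst]
      simp
    · have e : (fun w : (𝒳 × 𝒴) × ℝ => (w.1.2, w.2)) = Prod.map Prod.snd id := rfl
      rw [e, ← Measure.map_prod_map _ _ measurable_snd measurable_id,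
        ← Measure.map_prod_map _ _ measurable_snd measurable_id]
      simp
  · intro h
    rw [hT, ← h]
    ring
end
end

section
/- Let (X₁,Y₁),…,(X₄,Y₄) be i.i.d. with law ω and write ζᵢⱼ = ζ(Xᵢ,Xⱼ), ηᵢⱼ = η(Yᵢ,Yⱼ). Assume all the expectations E[|ζᵢⱼ η_{kl}|] over pairs of index pairs (i,j), (k,l) from {1,2,3,4} are finite. Then E[(ζ₁₂ + ζ₃₄ − ζ₁₃ − ζ₂₄)(η₁₂ + η₃₄ − η₁₃ − η₂₄)] = 4·(E[ζ₁₂η₁₂] + E[ζ₁₂]·E[η₁₂] − 2·E[ζ₁₂η₁₃]) = 4·HSIC(ω,ζ,η). -/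
/-!
Expanding the product gives sixteen terms `± E[ζᵢⱼ ηₖₗ]`. Since the coordinates are i.i.d. and the
kernels are symmetric, each term depends only on how many indices the pairs `{i,j}` and `{k,l}` share:

* both: `E[ζ₁₂ η₁₂]`, four terms with sign `+` (`integral_same_pair`);
* none: `E[ζ₁₂] E[η₁₂]` by independence, four terms with sign `+` (`integral_disjoint_pairs`);
* exactly one: `E[ζ₁₂ η₁₃]`, eight terms with sign `-` (`integral_shared_index`).

The hypothesis on `E|ζᵢⱼ ηₖₗ|` is what allows the expectation to be split into these terms.
-/

open MeasureTheory

noncomputable section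

/-- The Hilbert–Schmidt independence criterion `HSIC(ω,ζ,η)`, expressed through integrals
against the joint law `ω` of `(X,Y)` (the pairs `(Xᵢ,Yᵢ)` are i.i.d. with law `ω`). -/
def HSICm {𝒳 𝒴 : Type*} [MeasurableSpace 𝒳] [MeasurableSpace 𝒴]
    (ω : Measure (𝒳 × 𝒴)) (ζ : 𝒳 → 𝒳 → ℝ) (η : 𝒴 → 𝒴 → ℝ) : ℝ :=
  (∫ p, ζ p.1.1 p.2.1 * η p.1.2 p.2.2 ∂(ω.prod ω))
  + (∫ p, ζ p.1.1 p.2.1 ∂(ω.prod ω)) * (∫ p, η p.1.2 p.2.2 ∂(ω.prod ω))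
  - 2 * ∫ t, ζ t.1.1 t.2.1.1 * η t.1.2 t.2.2.2 ∂(ω.prod (ω.prod ω))

section Coordinates

variable {Z : Type*} [MeasurableSpace Z] (ω : Measure Z) [IsProbabilityMeasure ω]

lemma map_coord (i : Fin 4) :
    (Measure.pi fun _ : Fin 4 => ω).map (fun w => w i) = ω :=
  (measurePreserving_eval (fun _ : Fin 4 => ω) i).map_eq

lemma iIndepFun_coord :
    ProbabilityTheory.iIndepFun (fun (i : Fin 4) (w : Fin 4 → Z) => w i)
      (Measure.pi fun _ : Fin 4 => ω) :=
  ProbabilityTheory.iIndepFun_pi (X := fun _ : Fin 4 => (id : Z → Z)) fun _ => aemeasurable_id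

lemma map_two_coords {i j : Fin 4} (hij : i ≠ j) :
    (Measure.pi fun _ : Fin 4 => ω).map (fun w => (w i, w j)) = ω.prod ω := by
  have h := (ProbabilityTheory.indepFun_iff_map_prod_eq_prod_map_map
    (measurable_pi_apply i).aemeasurable (measurable_pi_apply j).aemeasurable).1
    ((iIndepFun_coord ω).indepFun hij)
  rwa [map_coord, map_coord] at h

lemma map_three_coords {i j k : Fin 4} (hij : i ≠ j) (hik : i ≠ k) (hjk : j ≠ k) :
    (Measure.pi fun _ : Fin 4 => ω).map (fun w => (w i, (w j, w k)))
      = ω.prod (ω.prod ω) := by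
  have h := (ProbabilityTheory.indepFun_iff_map_prod_eq_prod_map_map
    (measurable_pi_apply i).aemeasurable
    ((measurable_pi_apply j).prodMk (measurable_pi_apply k)).aemeasurable).1
    ((iIndepFun_coord ω).indepFun_prodMk (fun i => measurable_pi_apply i) j k i
      hij.symm hik.symm).symm
  rwa [map_coord, map_two_coords ω hjk] at h

end Coordinates

section Terms

variable {𝒳 𝒴 : Type*} [MeasurableSpace 𝒳] [MeasurableSpace 𝒴]
  {ζ : 𝒳 → 𝒳 → ℝ} {η : 𝒴 → 𝒴 → ℝ}

lemma measurable_zeta_fst (hζ : Measurable fun p : 𝒳 × 𝒳 => ζ p.1 p.2) :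
    Measurable fun p : (𝒳 × 𝒴) × (𝒳 × 𝒴) => ζ p.1.1 p.2.1 :=
  hζ.comp (measurable_fst.fst.prodMk measurable_snd.fst)

lemma measurable_eta_snd (hη : Measurable fun p : 𝒴 × 𝒴 => η p.1 p.2) :
    Measurable fun p : (𝒳 × 𝒴) × (𝒳 × 𝒴) => η p.1.2 p.2.2 :=
  hη.comp (measurable_fst.snd.prodMk measurable_snd.snd)

lemma measurable_coord_pair (i j : Fin 4) :
    Measurable fun w : Fin 4 → 𝒳 × 𝒴 => (w i, w j) :=
  (measurable_pi_apply i).prodMk (measurable_pi_apply j)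

variable (ω : Measure (𝒳 × 𝒴)) [IsProbabilityMeasure ω]

lemma integral_same_pair (hζ : Measurable fun p : 𝒳 × 𝒳 => ζ p.1 p.2)
    (hη : Measurable fun p : 𝒴 × 𝒴 => η p.1 p.2) {i j : Fin 4} (hij : i ≠ j) :
    ∫ w, ζ (w i).1 (w j).1 * η (w i).2 (w j).2 ∂(Measure.pi fun _ : Fin 4 => ω)
      = ∫ p, ζ p.1.1 p.2.1 * η p.1.2 p.2.2 ∂(ω.prod ω) := by
  rw [← map_two_coords ω hij]
  exact (integral_map (measurable_coord_pair i j).aemeasurable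
    ((measurable_zeta_fst hζ).mul (measurable_eta_snd hη)).aestronglyMeasurable).symm

lemma integral_disjoint_pairs (hζ : Measurable fun p : 𝒳 × 𝒳 => ζ p.1 p.2)
    (hη : Measurable fun p : 𝒴 × 𝒴 => η p.1 p.2) {i j k l : Fin 4}
    (hij : i ≠ j) (hkl : k ≠ l) (hik : i ≠ k) (hil : i ≠ l) (hjk : j ≠ k) (hjl : j ≠ l) :
    ∫ w, ζ (w i).1 (w j).1 * η (w k).2 (w l).2 ∂(Measure.pi fun _ : Fin 4 => ω)
      = (∫ p, ζ p.1.1 p.2.1 ∂(ω.prod ω)) * ∫ p, η p.1.2 p.2.2 ∂(ω.prod ω) := by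
  have hind := ((iIndepFun_coord ω).indepFun_prodMk_prodMk (fun m => measurable_pi_apply m)
    i j k l hik hil hjk hjl).comp (measurable_zeta_fst hζ) (measurable_eta_snd hη)
  refine (hind.integral_fun_mul_eq_mul_integral
    ((measurable_zeta_fst hζ).comp (measurable_coord_pair i j)).aestronglyMeasurable
    ((measurable_eta_snd hη).comp (measurable_coord_pair k l)).aestronglyMeasurable).trans ?_
  congr 1
  · rw [← map_two_coords ω hij]
    exact (integral_map (measurable_coord_pair i j).aemeasurable
      (measurable_zeta_fst hζ).aestronglyMeasurable).symm
  · rw [← map_two_coords ω hkl]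
    exact (integral_map (measurable_coord_pair k l).aemeasurable
      (measurable_eta_snd hη).aestronglyMeasurable).symm

lemma integral_shared_index (hζ : Measurable fun p : 𝒳 × 𝒳 => ζ p.1 p.2)
    (hη : Measurable fun p : 𝒴 × 𝒴 => η p.1 p.2) {i j k : Fin 4}
    (hij : i ≠ j) (hik : i ≠ k) (hjk : j ≠ k) :
    ∫ w, ζ (w i).1 (w j).1 * η (w i).2 (w k).2 ∂(Measure.pi fun _ : Fin 4 => ω)
      = ∫ t, ζ t.1.1 t.2.1.1 * η t.1.2 t.2.2.2 ∂(ω.prod (ω.prod ω)) := by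
  rw [← map_three_coords ω hij hik hjk]
  have hφ : Measurable fun w : Fin 4 → 𝒳 × 𝒴 => (w i, (w j, w k)) :=
    (measurable_pi_apply i).prodMk (measurable_coord_pair j k)
  have hf : Measurable fun t : (𝒳 × 𝒴) × ((𝒳 × 𝒴) × (𝒳 × 𝒴)) =>
      ζ t.1.1 t.2.1.1 * η t.1.2 t.2.2.2 :=
    ((measurable_zeta_fst hζ).comp (measurable_fst.prodMk measurable_snd.fst)).mul
      ((measurable_eta_snd hη).comp (measurable_fst.prodMk measurable_snd.snd))
  exact (integral_map hφ.aemeasurable hf.aestronglyMeasurable).symm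

end Terms

/-- For i.i.d. pairs `(X₁,Y₁),…,(X₄,Y₄) ~ ω` (modelled by the product
measure `⨂_{i : Fin 4} ω`), with `ζᵢⱼ = ζ(Xᵢ,Xⱼ)` and `ηᵢⱼ = η(Yᵢ,Yⱼ)`, if all
expectations `E[|ζᵢⱼ η_{kl}|]` (over index pairs `i ≠ j`, `k ≠ l`) are finite, then
`E[(ζ₁₂+ζ₃₄−ζ₁₃−ζ₂₄)(η₁₂+η₃₄−η₁₃−η₂₄)]
  = 4·(E[ζ₁₂η₁₂] + E[ζ₁₂]E[η₁₂] − 2E[ζ₁₂η₁₃]) = 4·HSIC(ω,ζ,η)`. -/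
theorem statement4 {𝒳 𝒴 : Type*} [MeasurableSpace 𝒳] [MeasurableSpace 𝒴]
    (ζ : 𝒳 → 𝒳 → ℝ) (η : 𝒴 → 𝒴 → ℝ)
    (hζ_meas : Measurable fun p : 𝒳 × 𝒳 => ζ p.1 p.2)
    (hη_meas : Measurable fun p : 𝒴 × 𝒴 => η p.1 p.2)
    (hζ_symm : ∀ x x', ζ x x' = ζ x' x)
    (hη_symm : ∀ y y', η y y' = η y' y)
    (ω : Measure (𝒳 × 𝒴)) [IsProbabilityMeasure ω]
    (h_int : ∀ i j k l : Fin 4, i ≠ j → k ≠ l →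
      Integrable (fun w : Fin 4 → 𝒳 × 𝒴 => |ζ (w i).1 (w j).1 * η (w k).2 (w l).2|)
        (Measure.pi fun _ : Fin 4 => ω)) :
    (∫ w : Fin 4 → 𝒳 × 𝒴,
        (ζ (w 0).1 (w 1).1 + ζ (w 2).1 (w 3).1 - ζ (w 0).1 (w 2).1 - ζ (w 1).1 (w 3).1) *
        (η (w 0).2 (w 1).2 + η (w 2).2 (w 3).2 - η (w 0).2 (w 2).2 - η (w 1).2 (w 3).2)
        ∂(Measure.pi fun _ : Fin 4 => ω))
      = 4 * ((∫ p, ζ p.1.1 p.2.1 * η p.1.2 p.2.2 ∂(ω.prod ω))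
          + (∫ p, ζ p.1.1 p.2.1 ∂(ω.prod ω)) * (∫ p, η p.1.2 p.2.2 ∂(ω.prod ω))
          - 2 * ∫ t, ζ t.1.1 t.2.1.1 * η t.1.2 t.2.2.2 ∂(ω.prod (ω.prod ω)))
    ∧ (∫ w : Fin 4 → 𝒳 × 𝒴,
        (ζ (w 0).1 (w 1).1 + ζ (w 2).1 (w 3).1 - ζ (w 0).1 (w 2).1 - ζ (w 1).1 (w 3).1) *
        (η (w 0).2 (w 1).2 + η (w 2).2 (w 3).2 - η (w 0).2 (w 2).2 - η (w 1).2 (w 3).2)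
        ∂(Measure.pi fun _ : Fin 4 => ω))
      = 4 * HSICm ω ζ η := by
  -- The second equality is the first one with `HSICm` unfolded.
  suffices h : _ from ⟨h, h⟩
  have hI : ∀ i j k l : Fin 4, i ≠ j → k ≠ l →
      Integrable (fun w : Fin 4 → 𝒳 × 𝒴 => ζ (w i).1 (w j).1 * η (w k).2 (w l).2)
        (Measure.pi fun _ : Fin 4 => ω) := fun i j k l hij hkl =>
    (integrable_norm_iff
      (((measurable_zeta_fst hζ_meas).comp (measurable_coord_pair i j)).mul
        ((measurable_eta_snd hη_meas).comp
          (measurable_coord_pair k l))).aestronglyMeasurable).1 (h_int i j k l hij hkl)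
  -- The four index pairs, and the signs with which they occur in both factors.
  let a : Fin 4 → Fin 4 := ![0, 2, 0, 1]
  let b : Fin 4 → Fin 4 := ![1, 3, 2, 3]
  let s : Fin 4 → ℝ := ![1, 1, -1, -1]
  have hab : ∀ m, a m ≠ b m := by decide
  have hexp : ∀ w : Fin 4 → 𝒳 × 𝒴,
      (ζ (w 0).1 (w 1).1 + ζ (w 2).1 (w 3).1 - ζ (w 0).1 (w 2).1 - ζ (w 1).1 (w 3).1) *
      (η (w 0).2 (w 1).2 + η (w 2).2 (w 3).2 - η (w 0).2 (w 2).2 - η (w 1).2 (w 3).2)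
      = ∑ m, ∑ n, s m * s n * (ζ (w (a m)).1 (w (b m)).1 * η (w (a n)).2 (w (b n)).2) := by
    intro w
    simp [Fin.sum_univ_four, a, b, s]
    ring
  simp_rw [hexp]
  rw [integral_finsetSum _ fun m _ => integrable_finsetSum _ fun n _ =>
    (hI _ _ _ _ (hab m) (hab n)).const_mul _]
  simp_rw [fun m => integral_finsetSum Finset.univ fun n _ =>
    (hI _ _ _ _ (hab m) (hab n)).const_mul (s m * s n), integral_const_mul]
  have hS : ∀ {i j : Fin 4}, i ≠ j → _ := fun {i j} hij =>
    integral_same_pair ω hζ_meas hη_meas (i := i) (j := j) hij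
  have hD : ∀ {i j k l : Fin 4}, i ≠ j → k ≠ l → i ≠ k → i ≠ l → j ≠ k → j ≠ l → _ :=
    fun {i j k l} h₁ h₂ h₃ h₄ h₅ h₆ => integral_disjoint_pairs ω hζ_meas hη_meas
      (i := i) (j := j) (k := k) (l := l) h₁ h₂ h₃ h₄ h₅ h₆
  -- The position of the shared index in either pair is immaterial, by symmetry of the kernels.
  have h11 : ∀ {i j k : Fin 4}, i ≠ j → i ≠ k → j ≠ k → _ := fun {i j k} h₁ h₂ h₃ =>
    integral_shared_index ω hζ_meas hη_meas (i := i) (j := j) (k := k) h₁ h₂ h₃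
  have h12 : ∀ {i j k : Fin 4}, i ≠ j → i ≠ k → j ≠ k →
      ∫ w, ζ (w i).1 (w j).1 * η (w k).2 (w i).2 ∂(Measure.pi fun _ : Fin 4 => ω)
        = ∫ t, ζ t.1.1 t.2.1.1 * η t.1.2 t.2.2.2 ∂(ω.prod (ω.prod ω)) := by
    intro i j k h₁ h₂ h₃
    rw [← h11 h₁ h₂ h₃]
    exact integral_congr_ae (.of_forall fun w => congrArg _ (hη_symm _ _))
  have h21 : ∀ {i j k : Fin 4}, i ≠ j → i ≠ k → j ≠ k →
      ∫ w, ζ (w j).1 (w i).1 * η (w i).2 (w k).2 ∂(Measure.pi fun _ : Fin 4 => ω)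
        = ∫ t, ζ t.1.1 t.2.1.1 * η t.1.2 t.2.2.2 ∂(ω.prod (ω.prod ω)) := by
    intro i j k h₁ h₂ h₃
    rw [← h11 h₁ h₂ h₃]
    exact integral_congr_ae (.of_forall fun w => congrArg (· * _) (hζ_symm _ _))
  have h22 : ∀ {i j k : Fin 4}, i ≠ j → i ≠ k → j ≠ k →
      ∫ w, ζ (w j).1 (w i).1 * η (w k).2 (w i).2 ∂(Measure.pi fun _ : Fin 4 => ω)
        = ∫ t, ζ t.1.1 t.2.1.1 * η t.1.2 t.2.2.2 ∂(ω.prod (ω.prod ω)) := by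
    intro i j k h₁ h₂ h₃
    rw [← h12 h₁ h₂ h₃]
    exact integral_congr_ae (.of_forall fun w => congrArg (· * _) (hζ_symm _ _))
  simp only [Fin.sum_univ_four, a, b, s, Matrix.cons_val]
  rw [hS (i := 0) (j := 1) (by decide), hS (i := 2) (j := 3) (by decide),
    hS (i := 0) (j := 2) (by decide), hS (i := 1) (j := 3) (by decide),
    hD (i := 0) (j := 1) (k := 2) (l := 3)
      (by decide) (by decide) (by decide) (by decide) (by decide) (by decide),
    h11 (i := 0) (j := 1) (k := 2) (by decide) (by decide) (by decide),
    h21 (i := 1) (j := 0) (k := 3) (by decide) (by decide) (by decide),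
    hD (i := 2) (j := 3) (k := 0) (l := 1)
      (by decide) (by decide) (by decide) (by decide) (by decide) (by decide),
    h12 (i := 2) (j := 3) (k := 0) (by decide) (by decide) (by decide),
    h22 (i := 3) (j := 2) (k := 1) (by decide) (by decide) (by decide),
    h11 (i := 0) (j := 2) (k := 1) (by decide) (by decide) (by decide),
    h21 (i := 2) (j := 0) (k := 3) (by decide) (by decide) (by decide),
    hD (i := 0) (j := 2) (k := 1) (l := 3)
      (by decide) (by decide) (by decide) (by decide) (by decide) (by decide),
    h12 (i := 1) (j := 3) (k := 0) (by decide) (by decide) (by decide),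
    h22 (i := 3) (j := 1) (k := 2) (by decide) (by decide) (by decide),
    hD (i := 1) (j := 3) (k := 0) (l := 2)
      (by decide) (by decide) (by decide) (by decide) (by decide) (by decide)]
  ring
end
end
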